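/- Let Γ be a connected graph. If depth R/I^{(t)} = 1 for some t ≥ 1, then depth R/I^{(t+1)} = 1. -/

import Mathlib

open MvPolynomial

noncomputable section

/-- The edge ideal of a graph `Γ` on vertex set `σ`, in `k[x_i : i ∈ σ]`. -/
def edgeIdeal (k : Type) [Field k] {σ : Type} (Γ : SimpleGraph σ) :
    Ideal (MvPolynomial σ k) :=
  Ideal.span { m | ∃ i j : σ, Γ.Adj i j ∧ m = X i * X j }

/-- The maximal graded ideal `(x_i : i ∈ σ)` of `k[x_i : i ∈ σ]`. -/
def maxIdeal (k : Type) [Field k] (σ : Type) : Ideal (MvPolynomial σ k) :=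
  Ideal.span (Set.range (X : σ → MvPolynomial σ k))

/-- `depth R/J = 0`, i.e. the maximal graded ideal is an associated prime of `R/J`. -/
def DepthZero (k : Type) [Field k] {σ : Type} (J : Ideal (MvPolynomial σ k)) : Prop :=
  maxIdeal k σ ∈ associatedPrimes (MvPolynomial σ k) (MvPolynomial σ k ⧸ J)

/-- The `i`-th local cohomology of `R/J` with support in the maximal graded ideal. -/
def locCoh (k : Type) [Field k] {σ : Type} (J : Ideal (MvPolynomial σ k)) (i : ℕ) :=
  (localCohomology (maxIdeal k σ) i).obj (ModuleCat.of _ (MvPolynomial σ k ⧸ J))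

/-- `depth R/J`, defined as the least `i` with `H^i_m(R/J) ≠ 0`. -/
def rDepth (k : Type) [Field k] {σ : Type} (J : Ideal (MvPolynomial σ k)) : ℕ :=
  sInf { i | Nontrivial (locCoh k J i) }

/-- A set `U` of vertices is dominating: every vertex outside `U` is adjacent to a
vertex of `U`. -/
def Dominating {σ : Type} (Γ : SimpleGraph σ) (U : Set σ) : Prop :=
  ∀ v ∉ U, ∃ u ∈ U, Γ.Adj u v

/-- The closed neighborhood `N[v]` of a vertex. -/
def closedNbhd {σ : Type} (Γ : SimpleGraph σ) (v : σ) : Set σ :=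
  insert v { u | Γ.Adj v u }

/-- The closed neighborhood `N[C]` of a set of vertices. -/
def closedNbhdSet {σ : Type} (Γ : SimpleGraph σ) (C : Set σ) : Set σ :=
  ⋃ v ∈ C, closedNbhd Γ v

/-- An odd cycle of length `m` (given as an injective map `ZMod m → σ` with consecutive
vertices adjacent) in `Γ`. -/
def IsOddCycle {σ : Type} (Γ : SimpleGraph σ) (m : ℕ) (c : ZMod m → σ) : Prop :=
  Odd m ∧ 3 ≤ m ∧ Function.Injective c ∧ ∀ i, Γ.Adj (c i) (c (i + 1))

/-- `F` is an independent set of `Γ`. -/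
def IsIndep {σ : Type} [Fintype σ] [DecidableEq σ] (Γ : SimpleGraph σ) (F : Finset σ) : Prop :=
  ∀ i ∈ F, ∀ j ∈ F, ¬ Γ.Adj i j

/-- `F` is a maximal independent set of `Γ`. -/
def IsMaxIndep {σ : Type} [Fintype σ] [DecidableEq σ] (Γ : SimpleGraph σ) (F : Finset σ) : Prop :=
  IsIndep Γ F ∧ ∀ G : Finset σ, IsIndep Γ G → F ⊆ G → G = F

/-- The prime ideal `P_F = (x_i : i ∉ F)`. -/
def PF (k : Type) [Field k] {σ : Type} [Fintype σ] [DecidableEq σ] (F : Finset σ) :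
    Ideal (MvPolynomial σ k) :=
  Ideal.span { m | ∃ i ∉ F, m = X i }

/-- The `t`-th symbolic power `I^{(t)} = ⋂_{F maximal independent} P_F^t` of the edge ideal. -/
def symbPow (k : Type) [Field k] {σ : Type} [Fintype σ] [DecidableEq σ]
    (Γ : SimpleGraph σ) (t : ℕ) : Ideal (MvPolynomial σ k) :=
  ⨅ F ∈ { F : Finset σ | IsMaxIndep Γ F }, PF k F ^ t

/-- The monomial `x^a`. -/
def xPow (k : Type) [Field k] {σ : Type} [Fintype σ] (a : σ → ℕ) : MvPolynomial σ k :=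
  ∏ i, X i ^ a i

/-- The localization `R[x_i^{-1} : i ∈ F]`. -/
abbrev locAt (k : Type) [Field k] {σ : Type} (F : Finset σ) :=
  Localization (Submonoid.closure ((fun i => (X i : MvPolynomial σ k)) '' (F : Set σ)))

/-- The degree complex `Δ_a(J) = {F : x^a ∉ J·R[x_i^{-1} : i ∈ F]}` of a monomial ideal `J`. -/
def degComplex (k : Type) [Field k] {σ : Type} [Fintype σ] (J : Ideal (MvPolynomial σ k))
    (a : σ → ℕ) : Set (Finset σ) :=
  { F | algebraMap (MvPolynomial σ k) (locAt k F) (xPow k a) ∉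
      J.map (algebraMap (MvPolynomial σ k) (locAt k F)) }

/-- `F` is a facet (maximal face) of the complex `Δ`. -/
def IsFacet {σ : Type} (Δ : Set (Finset σ)) (F : Finset σ) : Prop :=
  F ∈ Δ ∧ ∀ G ∈ Δ, F ⊆ G → G = F

/-- The complex `Δ` is disconnected: its vertex set splits into two nonempty parts such that
no face meets both. -/
def ComplexDisconnected {σ : Type} (Δ : Set (Finset σ)) : Prop :=
  ∃ A B : Set σ, A.Nonempty ∧ B.Nonempty ∧ Disjoint A B ∧
    (∀ i, {i} ∈ Δ ↔ i ∈ A ∪ B) ∧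
    ∀ F ∈ Δ, ¬ ((∃ i ∈ F, i ∈ A) ∧ (∃ j ∈ F, j ∈ B))

/-- The polynomial ring `R_v = k[x_i : i ≠ v]`. -/
abbrev Rv (k : Type) [Field k] {σ : Type} (v : σ) := MvPolynomial { i : σ // i ≠ v } k

/-- The localization `R[x_v^{-1}]`. -/
abbrev LocAway (k : Type) [Field k] {σ : Type} (v : σ) :=
  Localization.Away (X v : MvPolynomial σ k)

/-- For an ideal `I` of `R`, the ideal `I_v = I·R[x_v^{-1}] ∩ R_v` of `R_v`. -/
def idealV (k : Type) [Field k] {σ : Type} (I : Ideal (MvPolynomial σ k)) (v : σ) :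
    Ideal (Rv k v) :=
  Ideal.comap ((algebraMap (MvPolynomial σ k) (LocAway k v)).comp
      (MvPolynomial.rename (Subtype.val : { i : σ // i ≠ v } → σ)).toRingHom)
    (I.map (algebraMap (MvPolynomial σ k) (LocAway k v)))

/-- The edge ideal of the induced subgraph `Γ_U` in `k[x_i : i ∈ U]`. -/
def edgeIdealOn (k : Type) [Field k] {σ : Type} (Γ : SimpleGraph σ) (U : Set σ) :
    Ideal (MvPolynomial U k) :=
  Ideal.span { m | ∃ i j : U, Γ.Adj (i : σ) (j : σ) ∧ m = X i * X j }

/-- `Γ` has no isolated vertices. -/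
def NoIsolated {σ : Type} (Γ : SimpleGraph σ) : Prop :=
  ∀ v : σ, ∃ u : σ, Γ.Adj v u

/-!
If no nonzero element of `M` is killed by a power of `m`, then `H^0_m(M) = 0`, and `H^1_m(M)`
vanishes if and only if every linear map `m ^ s → M` extends to `R`, i.e. is multiplication by an
element of `M`.

For `M = R ⧸ ⋂ P_F ^ t` this can be read off coefficientwise: `x^a` lies in `P_F ^ t` if and only
if its degree off `F` is at least `t`, so the coefficient at `x^a` is only seen by the `F` with
`degreeOff F a < t`, which are the facets of the degree complex `Δ_a`. If all `Δ_a` are connected,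
then the local multipliers `φ (x_v ^ s) / x_v ^ s` agree along the facets and glue to an element of
`M`. If `Δ_a` is disconnected, then multiplication by `x^a` on one side and by `0` on the other side
defines a map which does not extend. Hence the depth is `1` if and only if some `Δ_a` is
disconnected.

Given a disconnected `Δ_a` for `t`, choose adjacent vertices `i` and `j` in facets on the two sides.
An independent set misses `i` or `j`, so passing from `a` to `a + e_i + e_j` raises every degree off
a maximal independent set by at least one, and by exactly one for the two chosen facets. The
disconnection therefore persists for `t + 1`.
-/

section Extendable

variable {R M P Q : Type*} [CommRing R] [AddCommGroup M] [Module R M] [AddCommGroup P] [Module R P]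
  [AddCommGroup Q] [Module R Q]

/-- A linear map on a submodule is extendable if it is the restriction of a linear map on the
ambient module. For `P` projective, `Ext¹(P ⧸ L, M)` is the module of linear maps `L → M` modulo
the extendable ones. -/
def IsExtendable {L : Submodule R P} (f : L →ₗ[R] M) : Prop :=
  ∃ F : P →ₗ[R] M, F ∘ₗ L.subtype = f

lemma IsExtendable.comp_restrict {L : Submodule R P} {K : Submodule R Q} {f : L →ₗ[R] M}
    (hf : IsExtendable f) {ψ : Q →ₗ[R] P} (hψ : ∀ x ∈ K, ψ x ∈ L) :
    IsExtendable (f ∘ₗ ψ.restrict hψ) := by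
  obtain ⟨F, rfl⟩ := hf
  exact ⟨F ∘ₗ ψ, rfl⟩

lemma IsExtendable.comp_restrict_of_sub_mem {L : Submodule R P} {K : Submodule R Q}
    {f : L →ₗ[R] M} {ψ ψ' : Q →ₗ[R] P} {hψ : ∀ x ∈ K, ψ x ∈ L}
    (hf : IsExtendable (f ∘ₗ ψ.restrict hψ)) (hψ' : ∀ x ∈ K, ψ' x ∈ L)
    (hsub : ∀ x, ψ' x - ψ x ∈ L) : IsExtendable (f ∘ₗ ψ'.restrict hψ') := by
  obtain ⟨F, hF⟩ := hf
  refine ⟨F + f ∘ₗ (ψ' - ψ).codRestrict L hsub, LinearMap.ext fun x ↦ ?_⟩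
  have hFx : F x = f ⟨ψ x, hψ x x.2⟩ := LinearMap.congr_fun hF x
  change F x + f ⟨ψ' x - ψ x, hsub x⟩ = f ⟨ψ' x, hψ' x x.2⟩
  rw [hFx, ← map_add]
  exact congrArg f (Subtype.ext (add_sub_cancel _ _))

lemma isExtendable_iff_exists_smul {I : Ideal R} {φ : I →ₗ[R] M} :
    IsExtendable φ ↔ ∃ g : M, ∀ b : I, φ b = (b : R) • g := by
  constructor
  · rintro ⟨F, rfl⟩
    exact ⟨F 1, fun b ↦ by simp [← map_smul]⟩
  · rintro ⟨g, hg⟩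
    exact ⟨LinearMap.toSpanSingleton R M g, LinearMap.ext fun b ↦ (hg b).symm⟩

lemma smul_apply_comm {I : Ideal R} (φ : I →ₗ[R] M) (b c : I) : (b : R) • φ c = (c : R) • φ b := by
  rw [← map_smul, ← map_smul]
  exact congrArg φ (Subtype.ext (mul_comm _ _))

lemma isExtendable_of_forall_apply_eq_smul {ι : Type*} {I : Ideal R} {φ : I →ₗ[R] M} (x : ι → I)
    (htorsion : ∀ y : M, (∀ i, (x i : R) • y = 0) → y = 0) (g : M)
    (hg : ∀ i, φ (x i) = (x i : R) • g) : IsExtendable φ := by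
  refine isExtendable_iff_exists_smul.2 ⟨g, fun b ↦ sub_eq_zero.1 (htorsion _ fun i ↦ ?_)⟩
  rw [smul_sub, smul_apply_comm, hg, smul_comm, sub_self]

lemma exists_linearMap_eq_smul_and_eq_zero {U W I : Ideal R} (hI : I ≤ U ⊔ W) (y : M)
    (hy : ∀ u ∈ U, u ∈ W → u • y = 0) :
    ∃ φ : I →ₗ[R] M, (∀ b : I, (b : R) ∈ U → φ b = (b : R) • y) ∧
      ∀ b : I, (b : R) ∈ W → φ b = 0 := by
  let onU : R →ₗ.[R] M := ⟨U, LinearMap.toSpanSingleton R M y ∘ₗ U.subtype⟩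
  let onW : R →ₗ.[R] M := ⟨W, 0⟩
  have hagree (u : onU.domain) (w : onW.domain) (huw : (u : R) = w) : onU u = onW w :=
    hy u u.2 (huw ▸ w.2)
  refine ⟨(onU.sup onW hagree).toFun ∘ₗ Submodule.inclusion hI, fun b hb ↦ ?_, fun b hb ↦ ?_⟩
  · exact ((onU.left_le_sup onW hagree).2 (x := ⟨b, hb⟩) rfl).symm
  · exact ((onU.right_le_sup onW hagree).2 (x := ⟨b, hb⟩) rfl).symm

lemma exists_comp_eq_of_ker_le_ker {q : Q →ₗ[R] P} (hq : Function.Surjective q) {z : Q →ₗ[R] M}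
    (hz : LinearMap.ker q ≤ LinearMap.ker z) : ∃ f : P →ₗ[R] M, f ∘ₗ q = z := by
  refine ⟨(LinearMap.ker q).liftQ z hz ∘ₗ (q.quotKerEquivOfSurjective hq).symm,
    LinearMap.ext fun y ↦ ?_⟩
  simp only [LinearMap.comp_apply, LinearEquiv.coe_coe,
    LinearMap.quotKerEquivOfSurjective_symm_apply, Submodule.liftQ_apply]

lemma exists_forall_apply_eq_of_exact {N : Type*} [AddCommGroup N] [Module R N] {d : Q →ₗ[R] P}
    {e : P →ₗ[R] N} (hde : Function.Exact d e) {z : Q →ₗ[R] M}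
    (hz : LinearMap.ker d ≤ LinearMap.ker z) :
    ∃ f : LinearMap.ker e →ₗ[R] M, ∀ y, f ⟨d y, hde.apply_apply_eq_zero y⟩ = z y := by
  have hsurj : Function.Surjective (d.codRestrict (LinearMap.ker e) hde.apply_apply_eq_zero) :=
    fun x ↦ ((hde x).1 x.2).imp fun _ ↦ Subtype.ext
  obtain ⟨f, hf⟩ := exists_comp_eq_of_ker_le_ker hsurj
    ((LinearMap.ker_codRestrict _ _ _).trans_le hz)
  exact ⟨f, LinearMap.congr_fun hf⟩

lemma isExtendable_of_forall_isExtendable [Module.Projective R P] [Module.Projective R Q]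
    {L : Submodule R P} {e : Q →ₗ[R] P ⧸ L} (he : Function.Surjective e)
    (h : ∀ f : L →ₗ[R] M, IsExtendable f) (f : LinearMap.ker e →ₗ[R] M) : IsExtendable f := by
  obtain ⟨α, hα⟩ := Module.projective_lifting_property e L.mkQ he
  obtain ⟨β, hβ⟩ := Module.projective_lifting_property L.mkQ e L.mkQ_surjective
  have hα_apply (x : P) : e (α x) = L.mkQ x := LinearMap.congr_fun hα x
  have hβ_apply (x : Q) : L.mkQ (β x) = e x := LinearMap.congr_fun hβ x
  have hα_mem : ∀ x ∈ L, α x ∈ LinearMap.ker e := fun x hx ↦ by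
    rwa [LinearMap.mem_ker, hα_apply, Submodule.mkQ_apply, Submodule.Quotient.mk_eq_zero]
  have hβ_mem : ∀ x ∈ LinearMap.ker e, β x ∈ L := fun x hx ↦ by
    rwa [← Submodule.Quotient.mk_eq_zero, ← Submodule.mkQ_apply, hβ_apply]
  have hfαβ : IsExtendable (f ∘ₗ (α ∘ₗ β).restrict fun x hx ↦ hα_mem _ (hβ_mem x hx)) :=
    (h (f ∘ₗ α.restrict hα_mem)).comp_restrict hβ_mem
  refine hfαβ.comp_restrict_of_sub_mem (ψ' := LinearMap.id) (fun _ hx ↦ hx) fun x ↦ ?_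
  rw [LinearMap.mem_ker, map_sub, LinearMap.comp_apply, hα_apply, hβ_apply, LinearMap.id_apply,
    sub_self]

lemma IsExtendable.comp_restrict_of_lift {Q' : Type*} [AddCommGroup Q'] [Module R Q']
    [Module.Projective R Q] {L : Submodule R P} {K : Submodule R Q} {f : L →ₗ[R] M}
    {e : Q' →ₗ[R] Q ⧸ K} (he : Function.Surjective e) {ψ : Q →ₗ[R] P} (hψ : K ≤ L.comap ψ)
    {γ : Q' →ₗ[R] P} (hγ : ∀ x, L.mkQ (γ x) = K.mapQ L ψ hψ (e x))
    {hγ_mem : ∀ x ∈ LinearMap.ker e, γ x ∈ L} (hf : IsExtendable (f ∘ₗ γ.restrict hγ_mem)) :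
    IsExtendable (f ∘ₗ ψ.restrict hψ) := by
  obtain ⟨α, hα⟩ := Module.projective_lifting_property e K.mkQ he
  have hα_apply (x : Q) : e (α x) = K.mkQ x := LinearMap.congr_fun hα x
  have hα_mem : ∀ x ∈ K, α x ∈ LinearMap.ker e := fun x hx ↦ by
    rwa [LinearMap.mem_ker, hα_apply, Submodule.mkQ_apply, Submodule.Quotient.mk_eq_zero]
  have hfγα : IsExtendable (f ∘ₗ (γ ∘ₗ α).restrict fun x hx ↦ hγ_mem _ (hα_mem x hx)) :=
    hf.comp_restrict hα_mem
  refine hfγα.comp_restrict_of_sub_mem hψ fun x ↦ ?_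
  rw [← Submodule.Quotient.mk_eq_zero, ← Submodule.mkQ_apply, map_sub, LinearMap.comp_apply, hγ,
    hα_apply, Submodule.mkQ_apply, Submodule.mkQ_apply, Submodule.mapQ_apply, sub_self]

end Extendable

section Homology

open CategoryTheory Limits

universe u

variable {R : Type u} [CommRing R] {ι : Type*} {c : ComplexShape ι} {i j l : ι}

lemma isZero_homology_of_forall {K : HomologicalComplex (ModuleCat.{u} R) c}
    (hi : c.prev j = i) (hl : c.next j = l)
    (h : ∀ z : K.X j, K.d j l z = 0 → ∃ w, K.d i j w = z) : IsZero (K.homology j) := by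
  rw [← HomologicalComplex.exactAt_iff_isZero_homology,
    HomologicalComplex.exactAt_iff' K i j l hi hl, ShortComplex.moduleCat_exact_iff]
  exact h

lemma exists_homology_class {K : HomologicalComplex (ModuleCat.{u} R) c}
    (hi : c.prev j = i) (hl : c.next j = l) (z : K.X j) (hz : K.d j l z = 0) :
    ∃ x : K.homology j, ∀ (K' : HomologicalComplex (ModuleCat.{u} R) c) (ψ : K ⟶ K'),
      HomologicalComplex.homologyMap ψ j x = 0 → ∃ w, K'.d i j w = ψ.f j z := by
  let g : ModuleCat.of R R ⟶ K.X j := ModuleCat.ofHom (LinearMap.toSpanSingleton R _ z)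
  have hg : g ≫ K.d j l = 0 := by
    ext
    simpa [g] using hz
  refine ⟨(K.liftCycles g l hl hg ≫ K.homologyπ j) (1 : R), fun K' ψ hψ ↦ ?_⟩
  have hfactor : (K.liftCycles g l hl hg ≫ K.homologyπ j) ≫ HomologicalComplex.homologyMap ψ j ≫
      K'.homologyι j = g ≫ ψ.f j ≫ K'.pOpcycles j := by simp
  have hzero : K'.pOpcycles j (ψ.f j z) = 0 := by
    have := ConcreteCategory.congr_hom hfactor (1 : R)
    rw [ConcreteCategory.comp_apply, ConcreteCategory.comp_apply, hψ, map_zero] at this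
    simpa [g] using this.symm
  subst hi
  exact ((K'.sc j).moduleCat_pOpcycles_eq_zero_iff _).1 hzero

end Homology

section Ext

open CategoryTheory Limits Opposite

universe u

variable {R : Type u} [CommRing R]

/-- The cochain map `Hom(Y, M) ⟶ Hom(X, M)` given by precomposition with a chain map `X ⟶ Y`. -/
def linearYonedaObjMap {X Y : ChainComplex (ModuleCat.{u} R) ℕ} (φ : X ⟶ Y) (M : ModuleCat.{u} R) :
    Y.linearYonedaObj R M ⟶ X.linearYonedaObj R M :=
  (HomologicalComplex.unopFunctor _ _).map
    ((((linearYoneda R (ModuleCat.{u} R)).obj M).rightOp.mapHomologicalComplex _).map φ).op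

lemma isoExt_hom_naturality {N N' : ModuleCat.{u} R} (p : N ⟶ N') (C : ProjectiveResolution N)
    (D : ProjectiveResolution N') (φ : C.complex ⟶ D.complex)
    (hφ : φ.f 0 ≫ D.π.f 0 = C.π.f 0 ≫ p) (M : ModuleCat.{u} R) (n : ℕ) :
    ((Ext R (ModuleCat.{u} R) n).map p.op).app M ≫ (C.isoExt n M).hom =
      (D.isoExt n M).hom ≫ HomologicalComplex.homologyMap (linearYonedaObjMap φ M) n := by
  have hderived := congrArg Quiver.Hom.unop
    (ProjectiveResolution.isoLeftDerivedObj_inv_naturality p C D φ hφ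
      ((linearYoneda R (ModuleCat.{u} R)).obj M).rightOp n)
  have hop := congrArg Quiver.Hom.unop (CommSq.vert_inv
    ⟨HomologicalComplex.homologyOp_hom_naturality (linearYonedaObjMap φ M) n⟩).w
  exact ((CommSq.mk hderived).vert_comp (CommSq.mk hop.symm)).w

section Resolution

variable {N : ModuleCat.{u} R} (C : ProjectiveResolution N)

/-- The augmentation `C₀ → N` of a projective resolution, as a linear map. -/
def augmentation : C.complex.X 0 →ₗ[R] N := (C.π.f 0).hom

lemma augmentation_surjective : Function.Surjective (augmentation C) :=
  (ModuleCat.epi_iff_surjective (C.π.f 0)).1 inferInstance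

lemma exact_d_augmentation : Function.Exact (C.complex.d 1 0).hom (augmentation C) :=
  (ShortComplex.ShortExact.moduleCat_exact_iff_function_exact _).1 C.exact₀

lemma exact_d_d : Function.Exact (C.complex.d 2 1).hom (C.complex.d 1 0).hom :=
  (ShortComplex.ShortExact.moduleCat_exact_iff_function_exact _).1 (C.exact_succ 0)

lemma projective_complex_X (i : ℕ) : Module.Projective R (C.complex.X i) :=
  (IsProjective.iff_projective _).2 (C.projective i)

end Resolution

lemma isZero_ext_zero {N M : ModuleCat.{u} R} (h : ∀ f : N →ₗ[R] M, f = 0) :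
    IsZero (((Ext R (ModuleCat.{u} R) 0).obj (op N)).obj M) := by
  let C := projectiveResolution N
  refine IsZero.of_iso (isZero_homology_of_forall (i := 0) (l := 1) (by simp) (by simp)
    fun z hz ↦ ⟨0, ?_⟩) (C.isoExt 0 M)
  replace hz : C.complex.d 1 0 ≫ z = 0 := hz
  obtain ⟨f, hf⟩ := exists_comp_eq_of_ker_le_ker (augmentation_surjective C) (z := z.hom) <| by
    rw [(exact_d_augmentation C).linearMap_ker_eq, LinearMap.range_le_ker_iff]
    exact congrArg ModuleCat.Hom.hom hz
  rw [h f, LinearMap.zero_comp] at hf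
  rw [map_zero]
  exact ModuleCat.hom_ext hf

lemma isZero_ext_one_quotient {P : Type u} [AddCommGroup P] [Module R P] [Module.Projective R P]
    (L : Submodule R P) (M : ModuleCat.{u} R) (h : ∀ f : L →ₗ[R] M, IsExtendable f) :
    IsZero (((Ext R (ModuleCat.{u} R) 1).obj (op (ModuleCat.of R (P ⧸ L)))).obj M) := by
  let C := projectiveResolution (ModuleCat.of R (P ⧸ L))
  have := projective_complex_X C 0
  refine IsZero.of_iso (isZero_homology_of_forall (i := 0) (l := 2) (by simp) (by simp)
    fun z hz ↦ ?_) (C.isoExt 1 M)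
  replace hz : C.complex.d 2 1 ≫ z = 0 := hz
  obtain ⟨f, hf⟩ := exists_forall_apply_eq_of_exact (exact_d_augmentation C) (z := z.hom) <| by
    rw [(exact_d_d C).linearMap_ker_eq, LinearMap.range_le_ker_iff]
    exact congrArg ModuleCat.Hom.hom hz
  obtain ⟨F, rfl⟩ := isExtendable_of_forall_isExtendable (augmentation_surjective C) h f
  exact ⟨ModuleCat.ofHom F, ModuleCat.hom_ext (LinearMap.ext hf)⟩

lemma exists_ext_class {N M : ModuleCat.{u} R} (D : ProjectiveResolution N)
    (z : D.complex.X 1 ⟶ M) (hz : D.complex.d 2 1 ≫ z = 0) :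
    ∃ x : ((Ext R (ModuleCat.{u} R) 1).obj (op N)).obj M,
      ∀ (N' : ModuleCat.{u} R) (p : N' ⟶ N) (C : ProjectiveResolution N'),
        ((Ext R (ModuleCat.{u} R) 1).map p.op).app M x = 0 →
          ∃ w : C.complex.X 0 ⟶ M,
            C.complex.d 1 0 ≫ w = (ProjectiveResolution.lift p C D).f 1 ≫ z := by
  obtain ⟨x, hx⟩ := exists_homology_class (K := D.complex.linearYonedaObj R M) (i := 0) (j := 1)
    (l := 2) (by simp) (by simp) z hz
  refine ⟨(D.isoExt 1 M).inv x, fun N' p C hpx ↦ hx (C.complex.linearYonedaObj R M)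
    (linearYonedaObjMap (ProjectiveResolution.lift p C D) M) ?_⟩
  have hnat := ConcreteCategory.congr_hom (isoExt_hom_naturality p C D _
    (ProjectiveResolution.lift_commutes_zero p C D) M 1) ((D.isoExt 1 M).inv x)
  rw [ConcreteCategory.comp_apply, ConcreteCategory.comp_apply, hpx, map_zero] at hnat
  have hid : (D.isoExt 1 M).hom ((D.isoExt 1 M).inv x) = x := by
    rw [← ConcreteCategory.comp_apply, Iso.inv_hom_id, ConcreteCategory.id_apply]
  rw [hid] at hnat
  exact hnat.symm

lemma augmentation_lift {N N' : ModuleCat.{u} R} (p : N' ⟶ N) (C : ProjectiveResolution N')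
    (D : ProjectiveResolution N) (y : C.complex.X 0) :
    augmentation D ((ProjectiveResolution.lift p C D).f 0 y) = p (augmentation C y) :=
  ConcreteCategory.congr_hom (ProjectiveResolution.lift_commutes_zero p C D) y

lemma lift_mem_ker_augmentation {N N' : ModuleCat.{u} R} (p : N' ⟶ N)
    (C : ProjectiveResolution N') (D : ProjectiveResolution N) (y : C.complex.X 0)
    (hy : y ∈ LinearMap.ker (augmentation C)) :
    ((ProjectiveResolution.lift p C D).f 0).hom y ∈ LinearMap.ker (augmentation D) := by
  rw [LinearMap.mem_ker, augmentation_lift, LinearMap.mem_ker.1 hy, map_zero]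

lemma exists_ext_class_of_ker_augmentation {N M : ModuleCat.{u} R} (D : ProjectiveResolution N)
    (f : LinearMap.ker (augmentation D) →ₗ[R] M) :
    ∃ x : ((Ext R (ModuleCat.{u} R) 1).obj (op N)).obj M,
      ∀ (N' : ModuleCat.{u} R) (p : N' ⟶ N) (C : ProjectiveResolution N'),
        ((Ext R (ModuleCat.{u} R) 1).map p.op).app M x = 0 →
          IsExtendable (f ∘ₗ ((ProjectiveResolution.lift p C D).f 0).hom.restrict
            (lift_mem_ker_augmentation p C D)) := by
  let d : D.complex.X 1 →ₗ[R] LinearMap.ker (augmentation D) :=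
    (D.complex.d 1 0).hom.codRestrict _ (exact_d_augmentation D).apply_apply_eq_zero
  obtain ⟨x, hx⟩ := exists_ext_class D (ModuleCat.ofHom (f ∘ₗ d)) <| by
    ext y
    have hdd : d (D.complex.d 2 1 y) = 0 := Subtype.ext ((exact_d_d D).apply_apply_eq_zero y)
    simp [hdd]
  refine ⟨x, fun N' p C hzero ↦ ?_⟩
  let φ := ProjectiveResolution.lift p C D
  obtain ⟨w, hw⟩ := hx N' p C hzero
  refine ⟨w.hom, LinearMap.ext fun y ↦ ?_⟩
  obtain ⟨v, hv⟩ := (exact_d_augmentation C y).1 y.2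
  calc w.hom y = w.hom (C.complex.d 1 0 v) := congrArg w.hom hv.symm
    _ = f ⟨D.complex.d 1 0 (φ.f 1 v), _⟩ := ConcreteCategory.congr_hom hw v
    _ = f ⟨φ.f 0 y, _⟩ := congrArg f <| Subtype.ext <|
      (ConcreteCategory.congr_hom (φ.comm 1 0) v).trans (congrArg (φ.f 0) hv)

lemma exists_ext_class_quotient {P : Type u} [AddCommGroup P] [Module R P]
    (L : Submodule R P) {M : ModuleCat.{u} R} (f : L →ₗ[R] M) :
    ∃ x : ((Ext R (ModuleCat.{u} R) 1).obj (op (ModuleCat.of R (P ⧸ L)))).obj M,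
      ∀ (Q : Type u) [AddCommGroup Q] [Module R Q] [Module.Projective R Q] (K : Submodule R Q)
        (ψ : Q →ₗ[R] P) (hψ : K ≤ L.comap ψ),
        ((Ext R (ModuleCat.{u} R) 1).map (ModuleCat.ofHom (K.mapQ L ψ hψ)).op).app M x = 0 →
          IsExtendable (f ∘ₗ ψ.restrict hψ) := by
  let D := projectiveResolution (ModuleCat.of R (P ⧸ L))
  have := projective_complex_X D 0
  obtain ⟨β, hβ⟩ := Module.projective_lifting_property L.mkQ (augmentation D) L.mkQ_surjective
  have hβ_apply (x) : L.mkQ (β x) = augmentation D x := LinearMap.congr_fun hβ x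
  have hβ_mem : ∀ x ∈ LinearMap.ker (augmentation D), β x ∈ L := fun x hx ↦ by
    rwa [← Submodule.Quotient.mk_eq_zero, ← Submodule.mkQ_apply, hβ_apply]
  obtain ⟨x, hx⟩ := exists_ext_class_of_ker_augmentation D (f ∘ₗ β.restrict hβ_mem)
  refine ⟨x, fun Q _ _ _ K ψ hψ hzero ↦ ?_⟩
  let C := projectiveResolution (ModuleCat.of R (Q ⧸ K))
  let p := ModuleCat.ofHom (K.mapQ L ψ hψ)
  exact IsExtendable.comp_restrict_of_lift (augmentation_surjective C) hψ
    (γ := β ∘ₗ ((ProjectiveResolution.lift p C D).f 0).hom)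
    (hγ_mem := fun y hy ↦ hβ_mem _ (lift_mem_ker_augmentation p C D y hy))
    (fun y ↦ (hβ_apply _).trans (augmentation_lift p C D y)) (hx _ p C hzero)

end Ext

section LocalCohomology

open CategoryTheory Limits Opposite

universe u

variable {R : Type u} [CommRing R] {I : Ideal R} {M : ModuleCat.{u} R}

variable (I M) in
/-- Local cohomology of `M` as the colimit over `s` of `Ext^i(R ⧸ I ^ s, M)`. -/
def localCohomologyObjIsoColimit (i : ℕ) : (localCohomology I i).obj M ≅ colimit
    ((localCohomology.diagram (localCohomology.idealPowersDiagram I) i).flip.obj M) :=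
  colimitObjIsoColimitCompEvaluation _ _

lemma isZero_localCohomology_obj {i : ℕ}
    (h : ∀ s, IsZero (((Ext R (ModuleCat.{u} R) i).obj (op (ModuleCat.of R (R ⧸ I ^ s)))).obj M)) :
    IsZero ((localCohomology I i).obj M) := by
  refine IsZero.of_iso ?_ (localCohomologyObjIsoColimit I M i)
  rw [IsZero.iff_id_eq_zero]
  exact colimit.hom_ext fun j ↦ (h (unop (unop j))).eq_of_src _ _

lemma exists_ext_map_eq_zero_of_isZero_localCohomology {i : ℕ}
    (h : IsZero ((localCohomology I i).obj M)) {s : ℕ}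
    (x : ((Ext R (ModuleCat.{u} R) i).obj (op (ModuleCat.of R (R ⧸ I ^ s)))).obj M) :
    ∃ (s' : ℕ) (hs : I ^ s' ≤ I ^ s), ((Ext R (ModuleCat.{u} R) i).map
      (ModuleCat.ofHom (Submodule.mapQ (I ^ s') (I ^ s) LinearMap.id hs)).op).app M x = 0 := by
  have : PreservesFilteredColimitsOfSize.{0, 0} (forget (ModuleCat.{u} R)) :=
    preservesFilteredColimitsOfSize_shrink.{0, u, 0, u} _
  let D := (localCohomology.diagram (localCohomology.idealPowersDiagram I) i).flip.obj M
  have hsub : Subsingleton (colimit D : ModuleCat.{u} R) :=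
    ModuleCat.isZero_iff_subsingleton.1 (h.of_iso (localCohomologyObjIsoColimit I M i).symm)
  obtain ⟨j, g, hg⟩ := Concrete.colimit_rep_eq_zero R D (op (op s)) x (Subsingleton.elim _ _)
  exact ⟨unop (unop j), Ideal.pow_le_pow_right g.unop.unop.down.down, hg⟩

lemma isZero_localCohomology_zero (h : ∀ s, ∀ x : M, (∀ b ∈ I ^ s, b • x = 0) → x = 0) :
    IsZero ((localCohomology I 0).obj M) :=
  isZero_localCohomology_obj fun s ↦ isZero_ext_zero fun f ↦ Submodule.linearMap_qext _ <|
    LinearMap.ext fun r ↦ h s _ fun b hb ↦ by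
      have hzero : b • Submodule.mkQ (I ^ s) r = 0 :=
        (Submodule.Quotient.mk_eq_zero _).2 (Ideal.mul_mem_right r _ hb)
      rw [LinearMap.comp_apply, ← map_smul, hzero, map_zero]

lemma isZero_localCohomology_one_iff
    (h : ∀ s, ∀ x : M, (∀ b ∈ I ^ s, b • x = 0) → x = 0) :
    IsZero ((localCohomology I 1).obj M) ↔
      ∀ (s : ℕ) (φ : ↥(I ^ s) →ₗ[R] M), IsExtendable φ := by
  refine ⟨fun hzero s φ ↦ ?_, fun hext ↦ isZero_localCohomology_obj fun s ↦
    isZero_ext_one_quotient _ M (hext s)⟩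
  obtain ⟨x, hx⟩ := exists_ext_class_quotient (I ^ s) φ
  obtain ⟨s', hs, hs_zero⟩ := exists_ext_map_eq_zero_of_isZero_localCohomology hzero x
  obtain ⟨g, hg⟩ := isExtendable_iff_exists_smul.1 (hx R (I ^ s') LinearMap.id hs hs_zero)
  exact isExtendable_of_forall_apply_eq_smul (Submodule.inclusion hs)
    (fun y hy ↦ h s' y fun b hb ↦ hy ⟨b, hb⟩) g hg

end LocalCohomology

section CoefficientFiltration

variable {k : Type} [Field k] {σ : Type} [Fintype σ] [DecidableEq σ]

/-- The degree of the monomial `x^a` in the variables outside `F`. -/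
def degreeOff (F : Finset σ) : (σ →₀ ℕ) →+ ℕ := ∑ i ∈ Fᶜ, Finsupp.applyAddHom i

lemma degreeOff_apply (F : Finset σ) (a : σ →₀ ℕ) : degreeOff F a = ∑ i ∈ Fᶜ, a i := by
  simp [degreeOff]

lemma degreeOff_single_of_mem {F : Finset σ} {v : σ} (hv : v ∈ F) (s : ℕ) :
    degreeOff F (Finsupp.single v s) = 0 := by
  rw [degreeOff_apply]
  exact Finset.sum_eq_zero fun i hi ↦ Finsupp.single_eq_of_ne
    (ne_of_mem_of_not_mem hv (Finset.mem_compl.1 hi)).symm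

lemma degreeOff_single_of_notMem {F : Finset σ} {v : σ} (hv : v ∉ F) (s : ℕ) :
    degreeOff F (Finsupp.single v s) = s := by
  rw [degreeOff_apply, Finset.sum_eq_single_of_mem v (Finset.mem_compl.2 hv)
    fun i _ hi ↦ Finsupp.single_eq_of_ne hi, Finsupp.single_eq_same]

variable (k) in
/-- The ideal of polynomials all of whose monomials have degree at least `t` in the variables
outside `F`. It is `PF k F ^ t`, see `mem_PF_pow_iff`. -/
def degreeOffIdeal (F : Finset σ) (t : ℕ) : Ideal (MvPolynomial σ k) where
  carrier := {f | ∀ a, degreeOff F a < t → coeff a f = 0}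
  add_mem' hf hg a ha := by rw [coeff_add, hf a ha, hg a ha, add_zero]
  zero_mem' a _ := coeff_zero a
  smul_mem' c f hf a ha := by
    rw [smul_eq_mul, coeff_mul]
    refine Finset.sum_eq_zero fun p hp ↦ ?_
    rw [← Finset.HasAntidiagonal.mem_antidiagonal.1 hp, map_add] at ha
    rw [hf p.2 (by lia), mul_zero]

lemma degreeOffIdeal_mul_le (F : Finset σ) (s t : ℕ) :
    degreeOffIdeal k F s * degreeOffIdeal k F t ≤ degreeOffIdeal k F (s + t) := by
  refine Ideal.mul_le.2 fun f hf g hg a ha ↦ ?_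
  rw [coeff_mul]
  refine Finset.sum_eq_zero fun p hp ↦ ?_
  rw [← Finset.HasAntidiagonal.mem_antidiagonal.1 hp, map_add] at ha
  by_cases hs : degreeOff F p.1 < s
  · rw [hf _ hs, zero_mul]
  · rw [hg _ (by lia), mul_zero]

lemma PF_le_degreeOffIdeal_one (F : Finset σ) : PF k F ≤ degreeOffIdeal k F 1 := by
  refine Ideal.span_le.2 ?_
  rintro _ ⟨i, hi, rfl⟩ a ha
  rw [coeff_X, if_neg]
  rintro rfl
  rw [degreeOff_single_of_notMem hi] at ha
  exact lt_irrefl 1 ha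

lemma PF_pow_le_degreeOffIdeal (F : Finset σ) (t : ℕ) : PF k F ^ t ≤ degreeOffIdeal k F t := by
  induction t with
  | zero => exact fun _ _ _ ha ↦ absurd ha (Nat.not_lt_zero _)
  | succ t ih =>
    rw [pow_succ]
    exact (Ideal.mul_mono ih (PF_le_degreeOffIdeal_one F)).trans (degreeOffIdeal_mul_le F t 1)

lemma X_mem_PF {F : Finset σ} {v : σ} (hv : v ∉ F) : X v ∈ PF k F :=
  Ideal.subset_span ⟨v, hv, rfl⟩

lemma monomial_mem_PF_pow {F : Finset σ} {t : ℕ} {a : σ →₀ ℕ} (ha : t ≤ degreeOff F a) (c : k) :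
    monomial a c ∈ PF k F ^ t := by
  refine Ideal.pow_le_pow_right ha ?_
  rw [monomial_eq, Finsupp.prod_fintype _ _ (by simp), ← Finset.prod_compl_mul_prod F,
    degreeOff_apply, ← Finset.prod_pow_eq_pow_sum]
  exact Ideal.mul_mem_left _ _ <| Ideal.mul_mem_right _ _ <| Ideal.prod_mem_prod fun i hi ↦
    Ideal.pow_mem_pow (X_mem_PF (Finset.mem_compl.1 hi)) _

lemma mem_PF_pow_iff {F : Finset σ} {t : ℕ} {f : MvPolynomial σ k} :
    f ∈ PF k F ^ t ↔ ∀ a, degreeOff F a < t → coeff a f = 0 := by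
  refine ⟨fun hf ↦ PF_pow_le_degreeOffIdeal F t hf, fun hf ↦ ?_⟩
  rw [f.as_sum]
  refine Ideal.sum_mem _ fun a ha ↦ monomial_mem_PF_pow ?_ _
  exact not_lt.1 fun hlt ↦ mem_support_iff.1 ha (hf a hlt)

end CoefficientFiltration

section Coefficients

variable {A σ : Type*} [CommSemiring A]

lemma coeff_add_single_X_pow_mul (v : σ) (s : ℕ) (a : σ →₀ ℕ) (f : MvPolynomial σ A) :
    coeff (a + Finsupp.single v s) (X v ^ s * f) = coeff a f := by
  rw [X_pow_eq_monomial, add_comm, coeff_monomial_mul, one_mul]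

lemma coeff_X_pow_mul_of_lt {v : σ} {s : ℕ} {a : σ →₀ ℕ} (ha : a v < s) (f : MvPolynomial σ A) :
    coeff a (X v ^ s * f) = 0 := by
  rw [X_pow_eq_monomial, coeff_monomial_mul', if_neg]
  exact fun hle ↦ ha.not_ge (Finsupp.single_le_iff.1 hle)

lemma exists_mvPolynomial_coeff_eq {c : (σ →₀ ℕ) → A} (hc : c.support.Finite) :
    ∃ f : MvPolynomial σ A, ∀ a, coeff a f = c a := by
  classical
  refine ⟨∑ a ∈ hc.toFinset, monomial a (c a), fun a ↦ ?_⟩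
  simp only [coeff_sum, coeff_monomial, Finset.sum_ite_eq', Set.Finite.mem_toFinset,
    Function.mem_support]
  exact ite_eq_left_iff.2 fun h ↦ (not_not.1 h).symm

end Coefficients

section FacetIdeals

variable {k : Type} [Field k] {σ : Type} [Fintype σ] [DecidableEq σ]
  {𝓕 : Set (Finset σ)} {t : ℕ} {a : σ →₀ ℕ}

variable (k) in
/-- The `t`-th symbolic power `⋂ P_F ^ t` of the Stanley–Reisner ideal of the simplicial complex
with set of facets `𝓕`. -/
def facetSymbPow (𝓕 : Set (Finset σ)) (t : ℕ) : Ideal (MvPolynomial σ k) :=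
  ⨅ F ∈ 𝓕, PF k F ^ t

/-- The facets of the degree complex `Δ_a` of `facetSymbPow k 𝓕 t`. -/
def degreeFacets (𝓕 : Set (Finset σ)) (t : ℕ) (a : σ →₀ ℕ) : Set (Finset σ) :=
  {F ∈ 𝓕 | degreeOff F a < t}

lemma mem_facetSymbPow_iff {f : MvPolynomial σ k} :
    f ∈ facetSymbPow k 𝓕 t ↔ ∀ F ∈ 𝓕, f ∈ PF k F ^ t := by
  simp only [facetSymbPow, Submodule.mem_iInf]

lemma mem_facetSymbPow_iff_coeff {f : MvPolynomial σ k} :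
    f ∈ facetSymbPow k 𝓕 t ↔ ∀ a, ∀ F ∈ degreeFacets 𝓕 t a, coeff a f = 0 := by
  simp only [mem_facetSymbPow_iff, mem_PF_pow_iff, degreeFacets, Set.mem_ofPred_eq]
  exact ⟨fun h a F hF ↦ h F hF.1 a hF.2, fun h F hF a ha ↦ h a F ⟨hF, ha⟩⟩

lemma mem_degreeFacets_add_single_iff {F : Finset σ} {v : σ} (hv : v ∈ F) (s : ℕ) :
    F ∈ degreeFacets 𝓕 t (a + Finsupp.single v s) ↔ F ∈ degreeFacets 𝓕 t a := by
  rw [degreeFacets, degreeFacets, Set.mem_ofPred_eq, Set.mem_ofPred_eq, map_add,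
    degreeOff_single_of_mem hv, add_zero]

lemma degreeFacets_zero (ht : 0 < t) : degreeFacets 𝓕 t 0 = 𝓕 := by
  simp [degreeFacets, ht]

lemma coeff_eq_zero_of_X_pow_mul_mem {f : MvPolynomial σ k} {F : Finset σ} {v : σ} {s : ℕ}
    (hf : X v ^ s * f ∈ facetSymbPow k 𝓕 t) (hF : F ∈ degreeFacets 𝓕 t a) (hv : v ∈ F) :
    coeff a f = 0 := by
  rw [← coeff_add_single_X_pow_mul v s]
  exact mem_facetSymbPow_iff_coeff.1 hf _ F ((mem_degreeFacets_add_single_iff hv s).2 hF)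

lemma mem_facetSymbPow_of_forall_X_pow_mul_mem (hne : ∅ ∉ 𝓕) {f : MvPolynomial σ k} {s : ℕ}
    (hf : ∀ v, X v ^ s * f ∈ facetSymbPow k 𝓕 t) : f ∈ facetSymbPow k 𝓕 t := by
  refine mem_facetSymbPow_iff_coeff.2 fun a F hF ↦ ?_
  obtain ⟨v, hv⟩ := Finset.nonempty_iff_ne_empty.2 (ne_of_mem_of_not_mem hF.1 hne)
  exact coeff_eq_zero_of_X_pow_mul_mem (hf v) hF hv

lemma eq_zero_of_forall_X_pow_smul_eq_zero (hne : ∅ ∉ 𝓕) {s : ℕ}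
    {y : MvPolynomial σ k ⧸ facetSymbPow k 𝓕 t}
    (hy : ∀ v, (X v ^ s : MvPolynomial σ k) • y = 0) : y = 0 := by
  obtain ⟨f, rfl⟩ := Ideal.Quotient.mk_surjective y
  exact Ideal.Quotient.eq_zero_iff_mem.2 <| mem_facetSymbPow_of_forall_X_pow_mul_mem hne
    fun v ↦ Ideal.Quotient.eq_zero_iff_mem.1 (hy v)

end FacetIdeals

section MaxIdeal

variable {k : Type} [Field k] {σ : Type}

lemma X_mem_maxIdeal (v : σ) : X v ∈ maxIdeal k σ :=
  Ideal.subset_span (Set.mem_range_self v)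

lemma X_pow_mem_maxIdeal_pow (v : σ) {s N : ℕ} (hsN : s ≤ N) :
    (X v ^ N : MvPolynomial σ k) ∈ maxIdeal k σ ^ s :=
  Ideal.pow_le_pow_right hsN (Ideal.pow_mem_pow (X_mem_maxIdeal v) N)

end MaxIdeal

section Disconnected

variable {σ : Type*}

/-- The simplicial complex generated by the faces in `𝓖` is disconnected: its vertices can be
split by `S` such that every generating face lies on one side and both sides occur. -/
def FacetsDisconnected (𝓖 : Set (Finset σ)) : Prop :=
  ∃ S : Set σ, (∀ F ∈ 𝓖, ↑F ⊆ S ∨ ↑F ⊆ Sᶜ) ∧ (∃ F ∈ 𝓖, ↑F ⊆ S) ∧ ∃ F ∈ 𝓖, ↑F ⊆ Sᶜ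

lemma apply_eq_of_not_facetsDisconnected {𝓖 : Set (Finset σ)} (h𝓖 : ¬ FacetsDisconnected 𝓖)
    {α : Type*} {c : σ → α} (hc : ∀ F ∈ 𝓖, ∀ v ∈ F, ∀ w ∈ F, c v = c w) {F G : Finset σ}
    (hF : F ∈ 𝓖) (hG : G ∈ 𝓖) {v w : σ} (hv : v ∈ F) (hw : w ∈ G) : c v = c w := by
  by_contra hne
  refine h𝓖 ⟨{x | c x = c v}, fun H hH ↦ ?_, ⟨F, hF, fun x hx ↦ hc F hF x hx v hv⟩,
    ⟨G, hG, fun x hx hxv ↦ hne (hxv.symm.trans (hc G hG x hx w hw))⟩⟩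
  by_cases hmeet : ∃ x ∈ H, c x = c v
  · obtain ⟨x, hx, hxv⟩ := hmeet
    exact Or.inl fun y hy ↦ (hc H hH y hy x hx).trans hxv
  · exact Or.inr fun y hy hyv ↦ hmeet ⟨y, hy, hyv⟩

lemma facetsDisconnected_of_singleton_mem {𝓕 : Set (Finset σ)} (hanti : IsAntichain (· ⊆ ·) 𝓕)
    (hnontriv : 𝓕.Nontrivial) {v : σ} (hv : {v} ∈ 𝓕) : FacetsDisconnected 𝓕 := by
  have hdisj (F) (hF : F ∈ 𝓕) (hne : F ≠ {v}) : (F : Set σ) ⊆ {v}ᶜ := fun x hx hxv ↦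
    hne (hanti.eq hv hF (Finset.singleton_subset_iff.2 (hxv ▸ hx))).symm
  refine ⟨{v}, fun F hF ↦ ?_, ⟨{v}, hv, by simp⟩, ?_⟩
  · rcases eq_or_ne F {v} with rfl | hne
    · simp
    · exact Or.inr (hdisj F hF hne)
  · obtain ⟨F, hF, hne⟩ := hnontriv.exists_ne {v}
    exact ⟨F, hF, hdisj F hF hne⟩

lemma empty_notMem_of_isAntichain {𝓕 : Set (Finset σ)} (hanti : IsAntichain (· ⊆ ·) 𝓕)
    (hnontriv : 𝓕.Nontrivial) : ∅ ∉ 𝓕 := fun h ↦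
  hnontriv.ne_singleton (IsAntichain.bot_mem_iff hanti |>.1 h)

lemma exists_mem_ne_of_not_facetsDisconnected {𝓕 : Set (Finset σ)}
    (hanti : IsAntichain (· ⊆ ·) 𝓕) (hnontriv : 𝓕.Nontrivial) (hconn : ¬ FacetsDisconnected 𝓕)
    {F : Finset σ} (hF : F ∈ 𝓕) (v : σ) : ∃ w ∈ F, w ≠ v := by
  classical
  by_contra! hsub
  rcases Finset.subset_singleton_iff.1 (Finset.subset_singleton_iff'.2 hsub) with rfl | rfl
  · exact empty_notMem_of_isAntichain hanti hnontriv hF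
  · exact hconn (facetsDisconnected_of_singleton_mem hanti hnontriv hF)

end Disconnected

section Gluing

variable {k : Type} [Field k] {σ : Type} [Fintype σ] [DecidableEq σ]
  {𝓕 : Set (Finset σ)} {t s : ℕ} {g : σ → MvPolynomial σ k}

lemma coeff_add_single_eq_of_compatible
    (hg : ∀ v w, X w ^ s * g v - X v ^ s * g w ∈ facetSymbPow k 𝓕 t) {a : σ →₀ ℕ} {F : Finset σ}
    (hF : F ∈ degreeFacets 𝓕 t a) {v w : σ} (hv : v ∈ F) (hw : w ∈ F) :
    coeff (a + Finsupp.single v s) (g v) = coeff (a + Finsupp.single w s) (g w) := by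
  have hzero := mem_facetSymbPow_iff_coeff.1 (hg v w) (a + Finsupp.single v s + Finsupp.single w s)
    F (by rwa [mem_degreeFacets_add_single_iff hw, mem_degreeFacets_add_single_iff hv])
  rwa [coeff_sub, coeff_add_single_X_pow_mul, add_right_comm, coeff_add_single_X_pow_mul,
    sub_eq_zero] at hzero

lemma coeff_eq_zero_of_compatible
    (hg : ∀ v w, X w ^ s * g v - X v ^ s * g w ∈ facetSymbPow k 𝓕 t) {b : σ →₀ ℕ} {F : Finset σ}
    (hF : F ∈ degreeFacets 𝓕 t b) {v w : σ} (hw : w ∈ F) (hwv : w ≠ v) (hbv : b v < s) :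
    coeff b (g v) = 0 := by
  have hzero := mem_facetSymbPow_iff_coeff.1 (hg v w) (b + Finsupp.single w s) F
    ((mem_degreeFacets_add_single_iff hw s).2 hF)
  have hlt : (b + Finsupp.single w s) v < s := by
    rwa [Finsupp.add_apply, Finsupp.single_eq_of_ne hwv.symm, add_zero]
  rwa [coeff_sub, coeff_add_single_X_pow_mul, coeff_X_pow_mul_of_lt hlt, sub_zero] at hzero

lemma exists_coeff_eq_of_compatible
    (hconn : ∀ a, ¬ FacetsDisconnected (degreeFacets 𝓕 t a))
    (hg : ∀ v w, X w ^ s * g v - X v ^ s * g w ∈ facetSymbPow k 𝓕 t) :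
    ∃ G : MvPolynomial σ k, ∀ a, ∀ F ∈ degreeFacets 𝓕 t a, ∀ v ∈ F,
      coeff a G = coeff (a + Finsupp.single v s) (g v) := by
  have hcoeff (a : σ →₀ ℕ) : ∃ c : k,
      (∀ F ∈ degreeFacets 𝓕 t a, ∀ v ∈ F, c = coeff (a + Finsupp.single v s) (g v)) ∧
        (c ≠ 0 → ∃ v, coeff (a + Finsupp.single v s) (g v) ≠ 0) := by
    by_cases hex : ∃ F ∈ degreeFacets 𝓕 t a, ∃ v, v ∈ F
    · obtain ⟨F, hF, v, hv⟩ := hex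
      refine ⟨_, fun G hG w hw ↦ ?_, fun hne ↦ ⟨v, hne⟩⟩
      exact apply_eq_of_not_facetsDisconnected (hconn a)
        (c := fun v ↦ coeff (a + Finsupp.single v s) (g v))
        (fun H hH x hx y hy ↦ coeff_add_single_eq_of_compatible hg hH hx hy) hF hG hv hw
    · exact ⟨0, fun F hF v hv ↦ absurd ⟨F, hF, v, hv⟩ hex, fun h ↦ absurd rfl h⟩
  choose c hc hc_supp using hcoeff
  have hfinite : c.support.Finite := by
    refine (Set.finite_iUnion fun v ↦ (g v).support.finite_toSet.preimage
      (add_left_injective (Finsupp.single v s)).injOn).subset fun a ha ↦ ?_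
    obtain ⟨v, hv⟩ := hc_supp a ha
    exact Set.mem_iUnion.2 ⟨v, mem_support_iff.2 hv⟩
  obtain ⟨G, hG⟩ := exists_mvPolynomial_coeff_eq hfinite
  exact ⟨G, fun a F hF v hv ↦ (hG a).trans (hc a F hF v hv)⟩

lemma exists_forall_X_pow_mul_sub_mem (hanti : IsAntichain (· ⊆ ·) 𝓕) (hnontriv : 𝓕.Nontrivial)
    (hconn : ∀ a, ¬ FacetsDisconnected (degreeFacets 𝓕 t a)) (hts : t ≤ s)
    (hg : ∀ v w, X w ^ s * g v - X v ^ s * g w ∈ facetSymbPow k 𝓕 t) :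
    ∃ G : MvPolynomial σ k, ∀ v, X v ^ s * G - g v ∈ facetSymbPow k 𝓕 t := by
  obtain ⟨G, hG⟩ := exists_coeff_eq_of_compatible hconn hg
  refine ⟨G, fun v ↦ mem_facetSymbPow_iff_coeff.2 fun b F hF ↦ ?_⟩
  rw [coeff_sub]
  rcases lt_or_ge (b v) s with hbv | hbv
  · have hconn_zero := degreeFacets_zero (𝓕 := 𝓕) (Nat.zero_lt_of_lt hF.2) ▸ hconn 0
    obtain ⟨w, hw, hwv⟩ := exists_mem_ne_of_not_facetsDisconnected hanti hnontriv hconn_zero hF.1 v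
    rw [coeff_X_pow_mul_of_lt hbv, coeff_eq_zero_of_compatible hg hF hw hwv hbv, sub_zero]
  · obtain ⟨a, rfl⟩ : ∃ a, b = a + Finsupp.single v s :=
      ⟨b - Finsupp.single v s, (tsub_add_cancel_of_le (Finsupp.single_le_iff.2 hbv)).symm⟩
    have hv : v ∈ F := by
      by_contra hv
      have hlt : degreeOff F (a + Finsupp.single v s) < t := hF.2
      rw [map_add, degreeOff_single_of_notMem hv] at hlt
      lia
    rw [coeff_add_single_X_pow_mul, hG a F ((mem_degreeFacets_add_single_iff hv s).1 hF) v hv,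
      sub_self]

lemma isExtendable_of_forall_not_facetsDisconnected (hanti : IsAntichain (· ⊆ ·) 𝓕)
    (hnontriv : 𝓕.Nontrivial) (hconn : ∀ a, ¬ FacetsDisconnected (degreeFacets 𝓕 t a)) {s : ℕ}
    (φ : ↥(maxIdeal k σ ^ s) →ₗ[MvPolynomial σ k] MvPolynomial σ k ⧸ facetSymbPow k 𝓕 t) :
    IsExtendable φ := by
  let x (v : σ) : ↥(maxIdeal k σ ^ s) :=
    ⟨X v ^ (s + t), X_pow_mem_maxIdeal_pow v (Nat.le_add_right s t)⟩
  choose g hg using fun v ↦ Ideal.Quotient.mk_surjective (φ (x v))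
  have hcompat (v w : σ) :
      X w ^ (s + t) * g v - X v ^ (s + t) * g w ∈ facetSymbPow k 𝓕 t := by
    rw [← Ideal.Quotient.eq, map_mul, map_mul, hg, hg]
    exact smul_apply_comm φ (x w) (x v)
  obtain ⟨G, hG⟩ :=
    exists_forall_X_pow_mul_sub_mem hanti hnontriv hconn (Nat.le_add_left t s) hcompat
  refine isExtendable_of_forall_apply_eq_smul x (fun y hy ↦
    eq_zero_of_forall_X_pow_smul_eq_zero (empty_notMem_of_isAntichain hanti hnontriv) hy)
    (Ideal.Quotient.mk _ G) fun v ↦ ?_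
  rw [← hg]
  exact (Ideal.Quotient.eq.2 (hG v)).symm

end Gluing

section VarPowIdeal

variable {k : Type} [Field k] {σ : Type} {S : Set σ} {t : ℕ}

variable (k) in
/-- The ideal generated by the `t`-th powers of the variables in `S`. -/
def varPowIdeal (S : Set σ) (t : ℕ) : Ideal (MvPolynomial σ k) :=
  Ideal.span ((fun v ↦ X v ^ t) '' S)

lemma X_pow_mem_varPowIdeal {v : σ} (hv : v ∈ S) {N : ℕ} (htN : t ≤ N) :
    X v ^ N ∈ varPowIdeal k S t :=
  Ideal.mem_of_dvd _ (pow_dvd_pow _ htN) (Ideal.subset_span ⟨v, hv, rfl⟩)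

lemma varPowIdeal_le_PF_pow [Fintype σ] [DecidableEq σ] {F : Finset σ}
    (hFS : Disjoint ↑F S) (t : ℕ) : varPowIdeal k S t ≤ PF k F ^ t := by
  refine Ideal.span_le.2 ?_
  rintro _ ⟨v, hv, rfl⟩
  exact Ideal.pow_mem_pow (X_mem_PF fun hvF ↦ hFS.notMem_of_mem_left hvF hv) t

lemma exists_maxIdeal_pow_le_sup [Finite σ] (S : Set σ) (t : ℕ) :
    ∃ N, maxIdeal k σ ^ N ≤ varPowIdeal k S t ⊔ varPowIdeal k Sᶜ t := by
  refine Ideal.exists_pow_le_of_le_radical_of_fg (Ideal.span_le.2 ?_)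
    (Submodule.fg_span (Set.finite_range X))
  rintro _ ⟨v, rfl⟩
  refine ⟨t, ?_⟩
  by_cases hv : v ∈ S
  · exact Ideal.mem_sup_left (X_pow_mem_varPowIdeal hv le_rfl)
  · exact Ideal.mem_sup_right (X_pow_mem_varPowIdeal hv le_rfl)

end VarPowIdeal

section Splitting

variable {k : Type} [Field k] {σ : Type} [Fintype σ] [DecidableEq σ]
  {𝓕 : Set (Finset σ)} {S : Set σ} {t : ℕ} {a : σ →₀ ℕ}

lemma mul_monomial_mem_facetSymbPow
    (hS : ∀ F ∈ degreeFacets 𝓕 t a, ↑F ⊆ S ∨ ↑F ⊆ Sᶜ) {u : MvPolynomial σ k}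
    (hu : u ∈ varPowIdeal k S t) (hu' : u ∈ varPowIdeal k Sᶜ t) (c : k) :
    u * monomial a c ∈ facetSymbPow k 𝓕 t := by
  refine mem_facetSymbPow_iff.2 fun F hF ↦ ?_
  rcases lt_or_ge (degreeOff F a) t with hlt | hge
  · refine Ideal.mul_mem_right _ _ ?_
    rcases hS F ⟨hF, hlt⟩ with hFS | hFS
    · exact varPowIdeal_le_PF_pow (Set.disjoint_compl_right_iff_subset.2 hFS) t hu'
    · exact varPowIdeal_le_PF_pow (Set.subset_compl_iff_disjoint_right.1 hFS) t hu
  · exact Ideal.mul_mem_left _ _ (monomial_mem_PF_pow hge c)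

lemma coeff_eq_of_X_pow_smul_mk_eq {F : Finset σ} (hF : F ∈ degreeFacets 𝓕 t a) {v : σ}
    (hv : v ∈ F) {s : ℕ} {p q : MvPolynomial σ k}
    (hpq : (X v ^ s : MvPolynomial σ k) • Ideal.Quotient.mk (facetSymbPow k 𝓕 t) p =
      (X v ^ s : MvPolynomial σ k) • Ideal.Quotient.mk (facetSymbPow k 𝓕 t) q) :
    coeff a p = coeff a q := by
  rw [← sub_eq_zero, ← coeff_sub]
  refine coeff_eq_zero_of_X_pow_mul_mem (s := s) ?_ hF hv
  rw [mul_sub]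
  exact Ideal.Quotient.eq.1 hpq

-- The map is multiplication by `x^a` on the variables of one side and zero on those of the other.
-- If it were multiplication by `g`, then `x^a` would have both coefficients `1` and `0` in `g`.
lemma exists_not_isExtendable_of_facetsDisconnected (hne : ∅ ∉ 𝓕)
    (hdisc : FacetsDisconnected (degreeFacets 𝓕 t a)) :
    ∃ (N : ℕ) (φ : ↥(maxIdeal k σ ^ N) →ₗ[MvPolynomial σ k]
      MvPolynomial σ k ⧸ facetSymbPow k 𝓕 t), ¬ IsExtendable φ := by
  obtain ⟨S, hS, ⟨F, hF, hFS⟩, ⟨G, hG, hGS⟩⟩ := hdisc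
  obtain ⟨v, hv⟩ := Finset.nonempty_iff_ne_empty.2 (ne_of_mem_of_not_mem hF.1 hne)
  obtain ⟨w, hw⟩ := Finset.nonempty_iff_ne_empty.2 (ne_of_mem_of_not_mem hG.1 hne)
  obtain ⟨N, hN⟩ := exists_maxIdeal_pow_le_sup (k := k) S t
  obtain ⟨φ, hφS, hφSc⟩ := exists_linearMap_eq_smul_and_eq_zero hN
    (Ideal.Quotient.mk (facetSymbPow k 𝓕 t) (monomial a 1)) fun u hu hu' ↦
      Ideal.Quotient.eq_zero_iff_mem.2 (mul_monomial_mem_facetSymbPow hS hu hu' 1)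
  refine ⟨N, φ, fun hφ ↦ ?_⟩
  obtain ⟨y, hy⟩ := isExtendable_iff_exists_smul.1 hφ
  obtain ⟨g, rfl⟩ := Ideal.Quotient.mk_surjective y
  let x (v : σ) : ↥(maxIdeal k σ ^ N) :=
    ⟨X v ^ (N + t), X_pow_mem_maxIdeal_pow v (Nat.le_add_right N t)⟩
  have hone : coeff a (monomial a 1) = coeff a g := coeff_eq_of_X_pow_smul_mk_eq hF hv <|
    (hφS (x v) (X_pow_mem_varPowIdeal (hFS hv) (Nat.le_add_left t N))).symm.trans (hy (x v))
  have hzero : coeff a 0 = coeff a g := coeff_eq_of_X_pow_smul_mk_eq hG hw <| by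
    rw [map_zero, smul_zero]
    exact (hφSc (x w) (X_pow_mem_varPowIdeal (hGS hw) (Nat.le_add_left t N))).symm.trans (hy (x w))
  rw [← hzero, coeff_monomial, if_pos rfl, coeff_zero] at hone
  exact one_ne_zero hone

end Splitting

section Depth

variable {k : Type} [Field k] {σ : Type}

lemma nontrivial_locCoh_iff_not_isZero {J : Ideal (MvPolynomial σ k)} {i : ℕ} :
    Nontrivial (locCoh k J i) ↔ ¬ CategoryTheory.Limits.IsZero
      ((localCohomology (maxIdeal k σ) i).obj (ModuleCat.of _ (MvPolynomial σ k ⧸ J))) := by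
  rw [ModuleCat.isZero_iff_subsingleton, not_subsingleton_iff_nontrivial]
  rfl

lemma rDepth_eq_one_iff {J : Ideal (MvPolynomial σ k)} (h : ¬ Nontrivial (locCoh k J 0)) :
    rDepth k J = 1 ↔ Nontrivial (locCoh k J 1) := by
  refine ⟨fun hdepth ↦ ?_, fun hone ↦ ?_⟩
  · have hpos : 0 < rDepth k J := hdepth ▸ one_pos
    have hmem : Nontrivial (locCoh k J (rDepth k J)) :=
      Nat.sInf_mem (Nat.nonempty_of_pos_sInf hpos)
    rwa [hdepth] at hmem
  · have hle (i) (hi : Nontrivial (locCoh k J i)) : 1 ≤ i :=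
      Nat.one_le_iff_ne_zero.2 fun h0 ↦ h (h0 ▸ hi)
    exact le_antisymm (Nat.sInf_le hone) (le_csInf ⟨1, hone⟩ hle)

lemma rDepth_facetSymbPow_eq_one_iff [Fintype σ] [DecidableEq σ] {𝓕 : Set (Finset σ)}
    (hanti : IsAntichain (· ⊆ ·) 𝓕) (hnontriv : 𝓕.Nontrivial) {t : ℕ} :
    rDepth k (facetSymbPow k 𝓕 t) = 1 ↔ ∃ a, FacetsDisconnected (degreeFacets 𝓕 t a) := by
  have hne := empty_notMem_of_isAntichain hanti hnontriv
  have htorsion (s : ℕ) (y : MvPolynomial σ k ⧸ facetSymbPow k 𝓕 t)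
      (hy : ∀ b ∈ maxIdeal k σ ^ s, b • y = 0) : y = 0 :=
    eq_zero_of_forall_X_pow_smul_eq_zero hne fun v ↦ hy _ (X_pow_mem_maxIdeal_pow v le_rfl)
  have hzero : ¬ Nontrivial (locCoh k (facetSymbPow k 𝓕 t) 0) := fun h ↦
    nontrivial_locCoh_iff_not_isZero.1 h (isZero_localCohomology_zero htorsion)
  rw [rDepth_eq_one_iff hzero, nontrivial_locCoh_iff_not_isZero,
    isZero_localCohomology_one_iff htorsion]
  refine ⟨fun hext ↦ ?_, fun ⟨a, ha⟩ hext ↦ ?_⟩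
  · by_contra! hconn
    exact hext fun s φ ↦ isExtendable_of_forall_not_facetsDisconnected hanti hnontriv hconn φ
  · obtain ⟨N, φ, hφ⟩ := exists_not_isExtendable_of_facetsDisconnected (k := k) hne ha
    exact hφ (hext N φ)

end Depth

section Succ

variable {σ : Type} [Fintype σ] [DecidableEq σ] {𝓕 : Set (Finset σ)} {t : ℕ} {a : σ →₀ ℕ}

lemma mem_degreeFacets_of_mem_degreeFacets_succ {F : Finset σ} {i j : σ} (hij : i ∈ F → j ∉ F)
    (hF : F ∈ degreeFacets 𝓕 (t + 1) (a + Finsupp.single i 1 + Finsupp.single j 1)) :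
    F ∈ degreeFacets 𝓕 t a := by
  refine ⟨hF.1, ?_⟩
  have hlt : degreeOff F (a + Finsupp.single i 1 + Finsupp.single j 1) < t + 1 := hF.2
  rw [map_add, map_add] at hlt
  by_cases hi : i ∈ F
  · rw [degreeOff_single_of_notMem (hij hi)] at hlt
    lia
  · rw [degreeOff_single_of_notMem hi] at hlt
    lia

lemma mem_degreeFacets_succ {F : Finset σ} (hF : F ∈ degreeFacets 𝓕 t a) (v : σ) :
    F ∈ degreeFacets 𝓕 (t + 1) (a + Finsupp.single v 1) := by
  refine ⟨hF.1, ?_⟩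
  rw [map_add]
  have hv : degreeOff F (Finsupp.single v 1) ≤ 1 := by
    by_cases hv : v ∈ F
    · rw [degreeOff_single_of_mem hv]
      exact zero_le_one
    · rw [degreeOff_single_of_notMem hv]
  exact add_lt_add_of_lt_of_le hF.2 hv

lemma exists_facetsDisconnected_degreeFacets_succ
    (hsep : ∀ F ∈ 𝓕, ∀ G ∈ 𝓕, Disjoint F G → ∃ i ∈ F, ∃ j ∈ G, ∀ H ∈ 𝓕, i ∈ H → j ∉ H)
    (hdisc : FacetsDisconnected (degreeFacets 𝓕 t a)) :
    ∃ b, FacetsDisconnected (degreeFacets 𝓕 (t + 1) b) := by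
  obtain ⟨S, hS, ⟨F, hF, hFS⟩, ⟨G, hG, hGS⟩⟩ := hdisc
  have hFG : Disjoint F G := Finset.disjoint_coe.1 (disjoint_compl_right.mono hFS hGS)
  obtain ⟨i, hi, j, hj, hij⟩ := hsep F hF.1 G hG.1 hFG
  refine ⟨a + Finsupp.single i 1 + Finsupp.single j 1, S, fun H hH ↦
    hS H (mem_degreeFacets_of_mem_degreeFacets_succ (hij H hH.1) hH), ⟨F, ?_, hFS⟩, G, ?_, hGS⟩
  · rw [add_right_comm, mem_degreeFacets_add_single_iff hi]
    exact mem_degreeFacets_succ hF j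
  · rw [mem_degreeFacets_add_single_iff hj]
    exact mem_degreeFacets_succ hG i

end Succ

section MaximalIndependentSets

variable {σ : Type} [Fintype σ] [DecidableEq σ] {Γ : SimpleGraph σ}

lemma isIndep_singleton (v : σ) : IsIndep Γ {v} := by
  intro i hi j hj
  rw [Finset.mem_singleton.1 hi, Finset.mem_singleton.1 hj]
  exact Γ.irrefl

lemma IsIndep.insert {F : Finset σ} (hF : IsIndep Γ F) {v : σ} (hv : ∀ u ∈ F, ¬ Γ.Adj u v) :
    IsIndep Γ (insert v F) := by
  intro i hi j hj hij
  rcases Finset.mem_insert.1 hi with rfl | hiF <;> rcases Finset.mem_insert.1 hj with rfl | hjF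
  · exact Γ.irrefl hij
  · exact hv j hjF hij.symm
  · exact hv i hiF hij
  · exact hF i hiF j hjF hij

lemma IsIndep.exists_isMaxIndep {F : Finset σ} (hF : IsIndep Γ F) :
    ∃ G, IsMaxIndep Γ G ∧ F ⊆ G := by
  obtain ⟨G, hFG, hG⟩ := (Set.toFinite {G | IsIndep Γ G}).exists_le_maximal hF
  exact ⟨G, ⟨hG.prop, fun H hH hGH ↦ (hG.eq_of_le hH hGH).symm⟩, hFG⟩

lemma IsMaxIndep.exists_adj {F : Finset σ} (hF : IsMaxIndep Γ F) {v : σ} (hv : v ∉ F) :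
    ∃ u ∈ F, Γ.Adj u v := by
  by_contra! hadj
  exact hv (hF.2 _ (hF.1.insert hadj) (Finset.subset_insert v F) ▸ Finset.mem_insert_self v F)

lemma isAntichain_setOf_isMaxIndep (Γ : SimpleGraph σ) :
    IsAntichain (· ⊆ ·) {F | IsMaxIndep Γ F} :=
  fun _ hF _ hG hne hFG ↦ hne (hF.2 _ hG.1 hFG).symm

lemma nontrivial_setOf_isMaxIndep (hΓ : Γ ≠ ⊥) : {F | IsMaxIndep Γ F}.Nontrivial := by
  obtain ⟨i, j, hij⟩ := SimpleGraph.ne_bot_iff_exists_adj.1 hΓ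
  obtain ⟨F, hF, hiF⟩ := (isIndep_singleton (Γ := Γ) i).exists_isMaxIndep
  obtain ⟨G, hG, hjG⟩ := (isIndep_singleton (Γ := Γ) j).exists_isMaxIndep
  refine ⟨F, hF, G, hG, ?_⟩
  rintro rfl
  exact hF.1 i (Finset.singleton_subset_iff.1 hiF) j (Finset.singleton_subset_iff.1 hjG) hij

lemma IsMaxIndep.exists_adj_of_disjoint {F G : Finset σ} (hF : IsMaxIndep Γ F)
    (hG : G.Nonempty) (hFG : Disjoint F G) : ∃ i ∈ F, ∃ j ∈ G, Γ.Adj i j := by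
  obtain ⟨j, hj⟩ := hG
  obtain ⟨i, hi, hij⟩ := hF.exists_adj (Finset.disjoint_right.1 hFG hj)
  exact ⟨i, hi, j, hj, hij⟩

lemma isMaxIndep_bot_iff {F : Finset σ} : IsMaxIndep (⊥ : SimpleGraph σ) F ↔ F = Finset.univ := by
  refine ⟨fun hF ↦ (hF.2 _ (fun _ _ _ _ ↦ id) (Finset.subset_univ F)).symm, ?_⟩
  rintro rfl
  exact ⟨fun _ _ _ _ ↦ id, fun G _ hG ↦ Finset.univ_subset_iff.1 hG⟩

lemma symbPow_bot (k : Type) [Field k] {t : ℕ} (ht : t ≠ 0) :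
    symbPow k (⊥ : SimpleGraph σ) t = ⊥ := by
  have hPF : PF k (Finset.univ : Finset σ) = ⊥ := by simp [PF]
  simp only [symbPow, isMaxIndep_bot_iff, Set.ofPred_eq_eq_singleton, Set.mem_singleton_iff,
    iInf_iInf_eq_left, hPF]
  exact zero_pow ht

end MaximalIndependentSets

theorem stmt13_general (k : Type) [Field k] {σ : Type} [Fintype σ] [DecidableEq σ]
    (Γ : SimpleGraph σ) {t : ℕ} (ht : 1 ≤ t) (h : rDepth k (symbPow k Γ t) = 1) :
    rDepth k (symbPow k Γ (t + 1)) = 1 := by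
  rcases eq_or_ne Γ ⊥ with rfl | hΓ
  · rwa [symbPow_bot k t.succ_ne_zero, ← symbPow_bot k (Nat.one_le_iff_ne_zero.1 ht)]
  have hanti := isAntichain_setOf_isMaxIndep Γ
  have hnontriv := nontrivial_setOf_isMaxIndep hΓ
  obtain ⟨a, ha⟩ := (rDepth_facetSymbPow_eq_one_iff hanti hnontriv).1 h
  refine (rDepth_facetSymbPow_eq_one_iff hanti hnontriv).2 <|
    exists_facetsDisconnected_degreeFacets_succ (fun F hF G hG hFG ↦ ?_) ha
  have hGne : G.Nonempty := Finset.nonempty_iff_ne_empty.2 <|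
    ne_of_mem_of_not_mem hG (empty_notMem_of_isAntichain hanti hnontriv)
  obtain ⟨i, hi, j, hj, hij⟩ := hF.exists_adj_of_disjoint hGne hFG
  exact ⟨i, hi, j, hj, fun H hH hiH hjH ↦ hH.1 i hiH j hjH hij⟩

/-- Let `Γ` be a connected graph. If `depth R/I^{(t)} = 1` for some
`t ≥ 1`, then `depth R/I^{(t+1)} = 1`. -/
theorem stmt13 (k : Type) [Field k] (n : ℕ) (Γ : SimpleGraph (Fin n))
    (hiso : NoIsolated Γ) (hconn : Γ.Connected)
    (t : ℕ) (ht : 1 ≤ t) (h : rDepth k (symbPow k Γ t) = 1) :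
    rDepth k (symbPow k Γ (t + 1)) = 1 :=
  stmt13_general k Γ ht h

end
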